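/- For every integer s, every real number a not of the form -j/2 with j a nonnegative integer, and every real z with 0 < z < 1, the function z ↦ Φ_HCB(s,a,z) is differentiable and (1/2)·z·(d/dz)Φ_HCB(s,a,z) = Φ_HCB(s-1,a,z). -/

import Mathlib

/-- The generalized binomial coefficient `C(x,y) = Γ(x+1)/(Γ(y+1) Γ(x-y+1))`. -/
noncomputable def genBinom (x y : ℝ) : ℝ :=
  Real.Gamma (x + 1) / (Real.Gamma (y + 1) * Real.Gamma (x - y + 1))

/-- The Hurwitz–Lerch type central binomial series
`Φ_HCB(s,a,z) = ∑_{n≥0} (2z)^{2(n+a)} / ( C(2(n+a), n+a) (n+a)^s )`. -/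
noncomputable def PhiHCB (s : ℤ) (a z : ℝ) : ℝ :=
  ∑' n : ℕ, (2 * z) ^ (2 * ((n : ℝ) + a)) /
    (genBinom (2 * ((n : ℝ) + a)) ((n : ℝ) + a) * ((n : ℝ) + a) ^ s)

/-!
The Euler operator `z d/dz` multiplies the `n`-th term of the series by its exponent `2 (n + a)`,
which lowers the power `(n + a) ^ s` in the denominator by one. Only the exchange of sum and
derivative needs an argument, as the exponents are not integers: a real power is monotone or
antitone on `(0, ∞)`, so on an interval `(x, w)` the differentiated terms are dominated by the sum
of their values at `x` and `w`. Both endpoint series converge by the ratio test, since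
`C(2b + 2, b + 1) / C(2b, b)` tends to `4` as `b → ∞`.
-/

open Filter Set Topology

/-- The coefficient `1 / (C(2b, b) bˢ)` of `(2z)^(2b)` in `PhiHCB`, as a function of the real
variable `b = n + a`. -/
noncomputable def hcbCoeff (s : ℤ) (b : ℝ) : ℝ :=
  (genBinom (2 * b) b * b ^ s)⁻¹

section RpowSeries

lemma rpow_le_max_of_mem_Icc {x y w : ℝ} (e : ℝ) (hx : 0 < x) (hy : y ∈ Icc x w) :
    y ^ e ≤ max (x ^ e) (w ^ e) := by
  rcases le_total 0 e with he | he
  · exact le_max_of_le_right (Real.rpow_le_rpow (hx.le.trans hy.1) hy.2 he)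
  · exact le_max_of_le_left (Real.rpow_le_rpow_of_nonpos hx hy.1 he)

variable {E : Type*} [NormedAddCommGroup E] [NormedSpace ℝ E]

lemma norm_rpow_smul_le_add {x y w : ℝ} (e : ℝ) (v : E) (hx : 0 < x) (hy : y ∈ Icc x w) :
    ‖y ^ e • v‖ ≤ ‖x ^ e • v‖ + ‖w ^ e • v‖ := by
  have hy₀ : 0 < y := hx.trans_le hy.1
  have hw₀ : 0 < w := hy₀.trans_le hy.2
  simp only [norm_smul, Real.norm_of_nonneg (Real.rpow_nonneg hx.le e),
    Real.norm_of_nonneg (Real.rpow_nonneg hy₀.le e),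
    Real.norm_of_nonneg (Real.rpow_nonneg hw₀.le e), ← add_mul]
  gcongr
  exact (rpow_le_max_of_mem_Icc e hx hy).trans
    (max_le_add_of_nonneg (Real.rpow_nonneg hx.le e) (Real.rpow_nonneg hw₀.le e))

lemma hasDerivAt_rpow_smul {y : ℝ} (e : ℝ) (v : E) (hy : y ≠ 0) :
    HasDerivAt (fun t : ℝ => t ^ e • v) (y⁻¹ • y ^ e • e • v) y := by
  refine ((Real.hasDerivAt_rpow_const (p := e) (Or.inl hy)).smul_const v).congr_deriv ?_
  rw [Real.rpow_sub_one hy, smul_smul, smul_smul]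
  ring_nf

theorem hasDerivAt_tsum_rpow_smul {ι : Type*} [CompleteSpace E] {c : ι → E} {e : ι → ℝ}
    {x y w : ℝ} (hx : 0 < x) (hy : y ∈ Ioo x w)
    (hsum : Summable fun i => y ^ e i • c i)
    (hsum_x : Summable fun i => ‖x ^ e i • e i • c i‖)
    (hsum_w : Summable fun i => ‖w ^ e i • e i • c i‖) :
    HasDerivAt (fun t => ∑' i, t ^ e i • c i) (y⁻¹ • ∑' i, y ^ e i • e i • c i) y := by
  have hderiv : ∀ i, ∀ t ∈ Ioo x w,
      HasDerivAt (fun t : ℝ => t ^ e i • c i) (t⁻¹ • t ^ e i • e i • c i) t :=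
    fun i t ht => hasDerivAt_rpow_smul (e i) (c i) (hx.trans ht.1).ne'
  have hbound : ∀ i, ∀ t ∈ Ioo x w, ‖t⁻¹ • t ^ e i • e i • c i‖ ≤
      x⁻¹ * (‖x ^ e i • e i • c i‖ + ‖w ^ e i • e i • c i‖) := by
    intro i t ht
    have ht₀ : 0 < t := hx.trans ht.1
    rw [norm_smul, norm_inv, Real.norm_of_nonneg ht₀.le]
    gcongr
    · exact ht.1.le
    · exact norm_rpow_smul_le_add (e i) (e i • c i) hx (Ioo_subset_Icc_self ht)
  rw [← tsum_const_smul'']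
  exact hasDerivAt_tsum_of_isPreconnected ((hsum_x.add hsum_w).mul_left x⁻¹) isOpen_Ioo
    isPreconnected_Ioo hderiv hbound hy hsum hy

end RpowSeries

lemma genBinom_two_mul_pos {b : ℝ} (hb : 0 < b) : 0 < genBinom (2 * b) b := by
  rw [genBinom, show 2 * b - b + 1 = b + 1 by ring]
  exact div_pos (Real.Gamma_pos_of_pos (by linarith))
    (mul_self_pos.mpr (Real.Gamma_pos_of_pos (by linarith)).ne')

lemma genBinom_two_mul_add_one {b : ℝ} (hb : b + 1 ≠ 0) (hb' : 2 * b + 1 ≠ 0) :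
    genBinom (2 * (b + 1)) (b + 1) = 2 * (2 * b + 1) / (b + 1) * genBinom (2 * b) b := by
  have hnum : Real.Gamma (2 * (b + 1) + 1) =
      2 * (b + 1) * ((2 * b + 1) * Real.Gamma (2 * b + 1)) := by
    rw [Real.Gamma_add_one (mul_ne_zero two_ne_zero hb), ← Real.Gamma_add_one hb']
    ring_nf
  have hden : Real.Gamma (b + 1 + 1) = (b + 1) * Real.Gamma (b + 1) := Real.Gamma_add_one hb
  rw [genBinom, genBinom, show 2 * (b + 1) - (b + 1) + 1 = b + 1 + 1 by ring,
    show 2 * b - b + 1 = b + 1 by ring, hnum, hden]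
  field_simp

lemma hcbCoeff_pos (s : ℤ) {b : ℝ} (hb : 0 < b) : 0 < hcbCoeff s b :=
  inv_pos.mpr (mul_pos (genBinom_two_mul_pos hb) (zpow_pos hb s))

lemma mul_hcbCoeff (s : ℤ) {b : ℝ} (hb : b ≠ 0) : b * hcbCoeff s b = hcbCoeff (s - 1) b := by
  rw [hcbCoeff, hcbCoeff, zpow_sub_one₀ hb]
  simp only [mul_inv, inv_inv]
  ring

lemma hcbCoeff_add_one (s : ℤ) {b : ℝ} (hb₀ : b ≠ 0) (hb₁ : b + 1 ≠ 0) (hb₂ : 2 * b + 1 ≠ 0) :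
    hcbCoeff s (b + 1) = (b + 1) / (2 * (2 * b + 1)) * (b / (b + 1)) ^ s * hcbCoeff s b := by
  have hpow : b ^ s ≠ 0 := zpow_ne_zero s hb₀
  rw [hcbCoeff, hcbCoeff, genBinom_two_mul_add_one hb₁ hb₂, div_zpow]
  field_simp

lemma eventually_natCast_add_pos (a : ℝ) : ∀ᶠ n : ℕ in atTop, 0 < (n : ℝ) + a :=
  (tendsto_atTop_add_const_right _ a tendsto_natCast_atTop_atTop).eventually_gt_atTop 0

lemma tendsto_hcbCoeff_add_one_div (s : ℤ) (a : ℝ) :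
    Tendsto (fun n : ℕ => hcbCoeff s (n + a + 1) / hcbCoeff s (n + a)) atTop (𝓝 (1 / 4)) := by
  have hfirst : Tendsto (fun n : ℕ => ((n : ℝ) + a + 1) / (2 * (2 * (n + a) + 1)))
      atTop (𝓝 (1 / 4)) :=
    (tendsto_add_mul_div_add_mul_atTop_nhds (a + 1) (4 * a + 2) 1 four_ne_zero).congr
      fun n => by ring_nf
  have hsecond : Tendsto (fun n : ℕ => ((n : ℝ) + a) / (n + a + 1)) atTop (𝓝 1) := by
    have h := tendsto_add_mul_div_add_mul_atTop_nhds a (a + 1) (1 : ℝ) one_ne_zero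
    rw [div_one] at h
    exact h.congr fun n => by ring_nf
  have hlim := hfirst.mul (hsecond.zpow₀ s (Or.inl one_ne_zero))
  rw [one_zpow, mul_one] at hlim
  refine hlim.congr' ?_
  filter_upwards [eventually_natCast_add_pos a] with n hn
  rw [hcbCoeff_add_one s hn.ne' (by positivity) (by positivity),
    mul_div_cancel_right₀ _ (hcbCoeff_pos s hn).ne']

lemma summable_rpow_mul_hcbCoeff (s : ℤ) (a : ℝ) {x : ℝ} (hx₀ : 0 < x) (hx₂ : x < 2) :
    Summable fun n : ℕ => x ^ (2 * (n + a)) * hcbCoeff s (n + a) := by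
  have hpos : ∀ᶠ n : ℕ in atTop, 0 < x ^ (2 * (n + a)) * hcbCoeff s (n + a) := by
    filter_upwards [eventually_natCast_add_pos a] with n hn
      using mul_pos (Real.rpow_pos_of_pos hx₀ _) (hcbCoeff_pos s hn)
  have hratio := (tendsto_hcbCoeff_add_one_div s a).const_mul (x ^ 2)
  refine summable_of_ratio_test_tendsto_lt_one (by nlinarith) (hpos.mono fun n hn => hn.ne')
    (hratio.congr' ?_)
  filter_upwards [hpos, (tendsto_add_atTop_nat 1).eventually hpos] with n hn hn'
  have hrpow : x ^ (2 * ((n : ℝ) + a + 1)) = x ^ 2 * x ^ (2 * ((n : ℝ) + a)) := by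
    rw [mul_add_one, Real.rpow_add hx₀, Real.rpow_two, mul_comm]
  have hshift : ((n + 1 : ℕ) : ℝ) + a = n + a + 1 := by
    rw [Nat.cast_add_one, add_right_comm]
  rw [Real.norm_of_nonneg hn.le, Real.norm_of_nonneg hn'.le, hshift, hrpow, mul_assoc,
    mul_div_assoc, mul_div_mul_left _ _ (Real.rpow_pos_of_pos hx₀ _).ne']

lemma PhiHCB_eq_tsum (s : ℤ) (a z : ℝ) :
    PhiHCB s a z = ∑' n : ℕ, (2 * z) ^ (2 * (n + a)) * hcbCoeff s (n + a) := by
  simp only [PhiHCB, hcbCoeff, div_eq_mul_inv]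

theorem hasDerivAt_PhiHCB (s : ℤ) {a z : ℝ} (ha : ∀ n : ℕ, (n : ℝ) + a ≠ 0)
    (hz₀ : 0 < z) (hz₁ : z < 1) :
    HasDerivAt (PhiHCB s a) (2 / z * PhiHCB (s - 1) a z) z := by
  have hcoeff : ∀ (x : ℝ) (n : ℕ), x ^ (2 * (n + a)) • (2 * (n + a)) • hcbCoeff s (n + a) =
      2 * (x ^ (2 * (n + a)) * hcbCoeff (s - 1) (n + a)) := fun x n => by
    rw [← mul_hcbCoeff s (ha n), smul_eq_mul, smul_eq_mul]
    ring
  have hsum : ∀ x : ℝ, 0 < x → x < 2 → Summable fun n : ℕ =>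
      ‖x ^ (2 * (n + a)) • (2 * (n + a)) • hcbCoeff s (n + a)‖ := fun x hx₀ hx₂ => by
    simpa only [hcoeff] using ((summable_rpow_mul_hcbCoeff (s - 1) a hx₀ hx₂).mul_left 2).norm
  have hseries := hasDerivAt_tsum_rpow_smul hz₀
    (show 2 * z ∈ Ioo z (z + 1) from ⟨by linarith, by linarith⟩)
    (summable_rpow_mul_hcbCoeff s a (by linarith) (by linarith))
    (hsum z hz₀ (by linarith)) (hsum (z + 1) (by linarith) (by linarith))
  have hcomp := hseries.comp z ((hasDerivAt_id z).const_mul 2)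
  rw [funext (PhiHCB_eq_tsum s a)]
  refine hcomp.congr_deriv ?_
  rw [tsum_congr (hcoeff (2 * z)), tsum_mul_left, ← PhiHCB_eq_tsum, smul_eq_mul]
  field_simp

/-- **Differential relation.** For every integer `s`, every real `a` not of the form `-j/2`
with `j` a nonnegative integer, and every real `z` with `0 < z < 1`, the function
`z ↦ Φ_HCB(s,a,z)` is differentiable and `(1/2) z Φ_HCB'(s,a,z) = Φ_HCB(s-1,a,z)`. -/
theorem phiHCB_differential_relation (s : ℤ) (a : ℝ) (ha : ∀ j : ℕ, a ≠ -(j : ℝ) / 2)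
    (z : ℝ) (hz0 : 0 < z) (hz1 : z < 1) :
    DifferentiableAt ℝ (PhiHCB s a) z ∧
    1 / 2 * (z * deriv (PhiHCB s a) z) = PhiHCB (s - 1) a z := by
  have hna : ∀ n : ℕ, (n : ℝ) + a ≠ 0 := fun n hn => ha (2 * n) (by push_cast; linarith)
  have h := hasDerivAt_PhiHCB s hna hz0 hz1
  refine ⟨h.differentiableAt, ?_⟩
  rw [h.deriv]
  field_simp
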